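/- Suppose the pair (A,B) is controllable (the controllability matrix [B, AB, …, A^{n-1}B] has rank n) and A is nonsingular. Then the L¹ value function V₁ is strictly convex on the reachable set R: for all distinct ξ, η ∈ R and all λ ∈ (0,1), V₁((1-λ)ξ + λη) < (1-λ)V₁(ξ) + λV₁(η). -/

import Mathlib

open MeasureTheory Set

noncomputable section

/-- Controllability matrix `[B, AB, ..., A^{n-1}B]`. -/
def ctrbMatrix (n : ℕ) (A : Matrix (Fin n) (Fin n) ℝ) (B : Fin n → ℝ) :
    Matrix (Fin n) (Fin n) ℝ :=
  Matrix.of fun i j => (A ^ (j : ℕ)).mulVec B i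

/-- `∫₀ᵀ e^{-As} B u(s) ds`. -/
def stateInt (n : ℕ) (T : ℝ) (A : Matrix (Fin n) (Fin n) ℝ) (B : Fin n → ℝ)
    (u : ℝ → ℝ) : Fin n → ℝ :=
  ∫ s in Icc (0:ℝ) T, u s • (NormedSpace.exp ((-s) • A)).mulVec B

/-- The magnitude constraint `‖u‖_∞ ≤ 1` on `[0,T]`. -/
def MagBdd (T : ℝ) (u : ℝ → ℝ) : Prop := ∀ t ∈ Icc (0:ℝ) T, |u t| ≤ 1

/-- The `L¹` norm of `u` on `[0,T]`. -/
def L1Norm (T : ℝ) (u : ℝ → ℝ) : ℝ := ∫ t in Icc (0:ℝ) T, |u t|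

/-- The `L⁰` norm of `u`: Lebesgue measure of `{t ∈ [0,T] : u t ≠ 0}`. -/
def L0Norm (T : ℝ) (u : ℝ → ℝ) : ℝ := (volume {t ∈ Icc (0:ℝ) T | u t ≠ 0}).toReal

/-- Admissible controls steering `ξ` to `0` at time `T`:
`∫₀ᵀ e^{-As} B u(s) ds = -ξ` and `‖u‖_∞ ≤ 1`. -/
def Admissible (n : ℕ) (T : ℝ) (A : Matrix (Fin n) (Fin n) ℝ) (B : Fin n → ℝ)
    (ξ : Fin n → ℝ) (u : ℝ → ℝ) : Prop :=
  Measurable u ∧ MagBdd T u ∧ stateInt n T A B u = -ξ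

/-- Value function of the maximum hands-off (`L⁰`-optimal) control problem. -/
def V0 (n : ℕ) (T : ℝ) (A : Matrix (Fin n) (Fin n) ℝ) (B : Fin n → ℝ)
    (ξ : Fin n → ℝ) : ℝ :=
  sInf {c | ∃ u, Admissible n T A B ξ u ∧ c = L0Norm T u}

/-- Value function of the `L¹`-optimal control problem. -/
def V1 (n : ℕ) (T : ℝ) (A : Matrix (Fin n) (Fin n) ℝ) (B : Fin n → ℝ)
    (ξ : Fin n → ℝ) : ℝ :=
  sInf {c | ∃ u, Admissible n T A B ξ u ∧ c = L1Norm T u}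

/-- The reachable set `R`. -/
def Reach (n : ℕ) (T : ℝ) (A : Matrix (Fin n) (Fin n) ℝ) (B : Fin n → ℝ) :
    Set (Fin n → ℝ) :=
  {x | ∃ u, Measurable u ∧ MagBdd T u ∧ x = stateInt n T A B u}

/-- The set `R_α`. -/
def ReachL1 (n : ℕ) (T : ℝ) (A : Matrix (Fin n) (Fin n) ℝ) (B : Fin n → ℝ)
    (α : ℝ) : Set (Fin n → ℝ) :=
  {x | ∃ u, Measurable u ∧ MagBdd T u ∧ L1Norm T u ≤ α ∧ x = stateInt n T A B u}

/-!
If `u` minimizes the `L¹` norm among the controls with `|u| ≤ 1` and given moment `∫ u φ`, then for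
`|h| ≤ 1` the perturbation `u - |u| (1 - |u|) h` still satisfies the constraint and has absolute
value exactly `|u| - u (1 - |u|) h`. By optimality `∫ u (1 - |u|) h` vanishes as soon as
`∫ |u| (1 - |u|) h φ` does, hence `u (1 - |u|) = |u| (1 - |u|) p(φ)` for some linear functional `p`,
and `u` is `0` or `±1` wherever `p(φ) ≠ ±1`. If equality held in the convexity inequality, then a
proper convex combination of two optimal controls would be optimal without any cancellation; where
such a combination is `0` or `±1`, the two controls agree, so their moments agree.

For `φ(s) = e^{-As} B` the function `p(φ)` is analytic, so it equals `±1` only on a null set unless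
it is constant. If it is constant, differentiating at `0` gives `p(A^{k+1} B) = 0` for all `k`; as
`B` lies in the span of these vectors, by Cayley–Hamilton when `A` is nonsingular, the constant
is `p(B) = 0`.
-/

section Exponential

variable {𝔸 : Type*} [NormedRing 𝔸] [NormedAlgebra ℝ 𝔸] [CompleteSpace 𝔸]
  (ℓ : StrongDual ℝ 𝔸) (a : 𝔸)

lemma hasDerivAt_strongDual_exp_smul_mul (b : 𝔸) (t : ℝ) :
    HasDerivAt (fun s : ℝ ↦ ℓ (NormedSpace.exp (s • a) * b))
      (ℓ (NormedSpace.exp (t • a) * (a * b))) t := by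
  rw [← mul_assoc]
  exact ℓ.hasFDerivAt.comp_hasDerivAt t ((hasDerivAt_exp_smul_const a t).mul_const b)

lemma analyticOnNhd_strongDual_exp_smul :
    AnalyticOnNhd ℝ (fun s : ℝ ↦ ℓ (NormedSpace.exp (s • a))) univ := by
  intro t _
  have hsmul : AnalyticAt ℝ (fun s : ℝ ↦ s • a) t := by fun_prop
  exact (ℓ.analyticAt _).comp_of_eq
    (AnalyticAt.comp_of_eq (NormedSpace.exp_analytic (t • a)) hsmul rfl) rfl

variable {ℓ a}

lemma strongDual_pow_succ_eq_zero_of_exp_smul_eq_const {c : ℝ}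
    (h : ∀ s : ℝ, ℓ (NormedSpace.exp (s • a)) = c) (k : ℕ) : ℓ (a ^ (k + 1)) = 0 := by
  suffices hvanish : ∀ s : ℝ, ℓ (NormedSpace.exp (s • a) * a ^ (k + 1)) = 0 by
    simpa using hvanish 0
  have hderiv {b : 𝔸} {d : ℝ} (hb : ∀ s : ℝ, ℓ (NormedSpace.exp (s • a) * b) = d) (s : ℝ) :
      ℓ (NormedSpace.exp (s • a) * (a * b)) = 0 :=
    (hasDerivAt_strongDual_exp_smul_mul ℓ a b s).unique
      ((hasDerivAt_const s d).congr_of_eventuallyEq (.of_forall hb))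
  induction k with
  | zero => simpa using hderiv (b := 1) (by simpa using h)
  | succ k ih => simpa only [← pow_succ'] using hderiv ih

lemma ae_ne_of_analyticOnNhd {f : ℝ → ℝ} (hf : AnalyticOnNhd ℝ f univ) {c : ℝ}
    (hc : ∃ x, f x ≠ c) : ∀ᵐ x, f x ≠ c := by
  obtain ⟨x, hx⟩ := hc
  have hcodiscrete := (hf.sub analyticOnNhd_const).preimage_zero_mem_codiscreteWithin
    (sub_ne_zero.2 hx) (mem_univ x) isConnected_univ
  have hae := ae_restrict_le_codiscreteWithin (μ := volume) MeasurableSet.univ hcodiscrete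
  rw [Measure.restrict_univ] at hae
  filter_upwards [hae] with y hy
  exact sub_ne_zero.1 hy

lemma ae_strongDual_exp_smul_ne {c : ℝ} (hc : c ≠ 0)
    (h : (∀ k : ℕ, ℓ (a ^ (k + 1)) = 0) → ℓ 1 = 0) :
    ∀ᵐ s : ℝ, ℓ (NormedSpace.exp (s • a)) ≠ c := by
  refine ae_ne_of_analyticOnNhd (analyticOnNhd_strongDual_exp_smul ℓ a) ?_
  by_contra! hconst
  have hone : ℓ 1 = c := by simpa using hconst 0
  exact hc (hone ▸ h (strongDual_pow_succ_eq_zero_of_exp_smul_eq_const hconst))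

end Exponential

section CayleyHamilton
open scoped Matrix

lemma mem_span_range_pow_succ_mulVec {K ι : Type*} [Field K] [Fintype ι] [DecidableEq ι]
    {A : Matrix ι ι K} (hA : A.det ≠ 0) (v : ι → K) :
    v ∈ Submodule.span K (range fun k : ℕ ↦ A ^ (k + 1) *ᵥ v) := by
  have hcoeff : A.charpoly.coeff 0 ≠ 0 := fun h ↦ hA (by
    rw [Matrix.det_eq_sign_charpoly_coeff, h, mul_zero])
  have hcayley := congrArg (· *ᵥ v) A.aeval_self_charpoly
  simp only [Polynomial.aeval_eq_sum_range, Finset.sum_range_succ', Matrix.add_mulVec,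
    Matrix.sum_mulVec, Matrix.smul_mulVec, pow_zero, Matrix.one_mulVec, Matrix.zero_mulVec]
    at hcayley
  rw [← Submodule.smul_mem_iff _ hcoeff, eq_neg_of_add_eq_zero_right hcayley]
  exact Submodule.neg_mem _ (Submodule.sum_mem _ fun k _ ↦
    Submodule.smul_mem _ _ (Submodule.subset_span (mem_range_self k)))

end CayleyHamilton

section Reflexive

lemma surjective_inclusionInDoubleDual (H : Type*) [NormedAddCommGroup H] [InnerProductSpace ℝ H]
    [CompleteSpace H] : Function.Surjective (NormedSpace.inclusionInDoubleDual ℝ H) := by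
  intro F
  let G : StrongDual ℝ H := F ∘L (InnerProductSpace.toDualMap ℝ H).toContinuousLinearMap
  refine ⟨(InnerProductSpace.toDual ℝ H).symm G, ContinuousLinearMap.ext fun f ↦ ?_⟩
  obtain ⟨y, rfl⟩ := (InnerProductSpace.toDual ℝ H).surjective f
  calc (InnerProductSpace.toDual ℝ H y) ((InnerProductSpace.toDual ℝ H).symm G)
      = inner ℝ ((InnerProductSpace.toDual ℝ H).symm G) y := real_inner_comm _ _
    _ = F (InnerProductSpace.toDual ℝ H y) := InnerProductSpace.toDual_symm_apply

variable {X : Type*} [NormedAddCommGroup X] [NormedSpace ℝ X]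

lemma isClosed_toWeakSpace_image {S : Set X} (hcl : IsClosed S) (hconv : Convex ℝ S) :
    IsClosed (toWeakSpace ℝ X '' S) :=
  isClosed_of_closure_subset (by rw [← hconv.toWeakSpace_closure ℝ, hcl.closure_eq])

lemma isCompact_toWeakSpace_image (hX : Function.Surjective (NormedSpace.inclusionInDoubleDual ℝ X))
    {S : Set X} (hcl : IsClosed S) (hconv : Convex ℝ S) (hbdd : Bornology.IsBounded S) :
    IsCompact (toWeakSpace ℝ X '' S) := by
  have hrange : range (NormedSpace.inclusionInDoubleDualWeak ℝ X) = univ := by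
    refine range_eq_univ.2 fun F ↦ ?_
    obtain ⟨x, hx⟩ := hX (WeakDual.toStrongDual F)
    exact ⟨toWeakSpace ℝ X x, hx⟩
  rw [← (isClosed_toWeakSpace_image hcl hconv).closure_eq]
  refine NormedSpace.isCompact_closure_of_isBounded ℝ X _ ?_ (hrange ▸ subset_univ _)
  rwa [preimage_image_eq S (toWeakSpace ℝ X).injective]

lemma exists_isMinOn_of_quasiconvexOn
    (hX : Function.Surjective (NormedSpace.inclusionInDoubleDual ℝ X)) {S : Set X} {f : X → ℝ}
    (hne : S.Nonempty) (hbdd : Bornology.IsBounded S) (hf : QuasiconvexOn ℝ S f)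
    (hcl : ∀ r, IsClosed {x ∈ S | f x ≤ r}) : ∃ x ∈ S, IsMinOn f S x := by
  have : Nonempty S := hne.to_subtype
  let sublevel : S → Set X := fun y ↦ {x ∈ S | f x ≤ f y}
  obtain ⟨z, hz⟩ := IsCompact.nonempty_iInter_of_directed_nonempty_isCompact_isClosed
    (fun y ↦ toWeakSpace ℝ X '' sublevel y)
    (fun y z ↦ by
      obtain h | h := le_total (f y) (f z)
      · exact ⟨y, subset_rfl, image_mono fun x hx ↦ ⟨hx.1, hx.2.trans h⟩⟩
      · exact ⟨z, image_mono fun x hx ↦ ⟨hx.1, hx.2.trans h⟩, subset_rfl⟩)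
    (fun y ↦ ⟨_, mem_image_of_mem _ ⟨y.2, le_rfl⟩⟩)
    (fun y ↦ isCompact_toWeakSpace_image hX (hcl _) (hf _) (hbdd.subset (sep_subset _ _)))
    (fun y ↦ isClosed_toWeakSpace_image (hcl _) (hf _))
  obtain ⟨x, rfl⟩ := (toWeakSpace ℝ X).surjective z
  have hx (y : S) : x ∈ sublevel y :=
    (toWeakSpace ℝ X).injective.mem_set_image.1 (mem_iInter.1 hz y)
  exact ⟨x, (hx ⟨_, hne.some_mem⟩).1, isMinOn_iff.2 fun y hy ↦ (hx ⟨y, hy⟩).2⟩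

end Reflexive

section Duality

variable {X E : Type*} [MeasurableSpace X] {μ : Measure X}
  [NormedAddCommGroup E] [NormedSpace ℝ E] {φ : X → E}

lemma integrable_simpleFunc_smul (hφ : Integrable φ μ) (h : SimpleFunc X ℝ) :
    Integrable (fun x ↦ h x • φ x) μ := by
  obtain ⟨C, hC⟩ := h.exists_forall_norm_le
  exact hφ.bdd_smul C h.aestronglyMeasurable (.of_forall hC)

/-- Integration against an integrable function `φ`, as a linear map on simple functions. It turns
the factorization of one integral through another into a statement about dual maps. -/
def integralSimpleFuncSMul (hφ : Integrable φ μ) : SimpleFunc X ℝ →ₗ[ℝ] E where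
  toFun h := ∫ x, h x • φ x ∂μ
  map_add' h₁ h₂ := by
    simpa only [SimpleFunc.coe_add, Pi.add_apply, add_smul] using
      integral_add (integrable_simpleFunc_smul hφ h₁) (integrable_simpleFunc_smul hφ h₂)
  map_smul' r h := by
    simp only [SimpleFunc.coe_smul, Pi.smul_apply, smul_assoc, integral_smul, RingHom.id_apply]

lemma integralSimpleFuncSMul_indicator (hφ : Integrable φ μ) {s : Set X} (hs : MeasurableSet s) :
    integralSimpleFuncSMul hφ (.piecewise s hs (.const X 1) (.const X 0)) = ∫ x in s, φ x ∂μ := by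
  rw [← integral_indicator hs]
  refine integral_congr_ae (.of_forall fun x ↦ ?_)
  by_cases hx : x ∈ s <;> simp [hx]

lemma exists_strongDual_ae_eq_of_ker_le [FiniteDimensional ℝ E] {b : X → ℝ}
    (hφ : Integrable φ μ) (hb : Integrable b μ)
    (h : LinearMap.ker (integralSimpleFuncSMul hφ) ≤ LinearMap.ker (integralSimpleFuncSMul hb)) :
    ∃ p : StrongDual ℝ E, b =ᵐ[μ] fun x ↦ p (φ x) := by
  have := FiniteDimensional.complete ℝ E
  obtain ⟨q, hq⟩ :
      integralSimpleFuncSMul hb ∈ LinearMap.range (integralSimpleFuncSMul hφ).dualMap := by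
    rw [LinearMap.range_dualMap_eq_dualAnnihilator_ker, Submodule.mem_dualAnnihilator]
    exact h
  let p : StrongDual ℝ E := q.toContinuousLinearMap
  refine ⟨p, hb.ae_eq_of_forall_setIntegral_eq _ _ (p.integrable_comp hφ) fun s hs _ ↦ ?_⟩
  rw [p.integral_comp_comm hφ.integrableOn, ← integralSimpleFuncSMul_indicator hφ hs,
    ← integralSimpleFuncSMul_indicator hb hs]
  exact (LinearMap.congr_fun hq _).symm

end Duality

section MomentProblem

open Filter
open scoped Topology

variable {X E : Type*} [MeasurableSpace X] [NormedAddCommGroup E] [NormedSpace ℝ E]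

/-- The constraints of the moment problem on a measure space: the control `u` has essential
supremum norm at most `1`, and the moment `c` against the kernel `φ`. -/
structure IsFeasible (μ : Measure X) (φ : X → E) (c : E) (u : X → ℝ) : Prop where
  aestronglyMeasurable : AEStronglyMeasurable u μ
  abs_le_one : ∀ᵐ x ∂μ, |u x| ≤ 1
  integral_eq : ∫ x, u x • φ x ∂μ = c

/-- The control `u` has least `L¹` norm among the feasible controls for the moment `c`. -/
def IsOptimal (μ : Measure X) (φ : X → E) (c : E) (u : X → ℝ) : Prop :=
  IsFeasible μ φ c u ∧ ∀ v, IsFeasible μ φ c v → ∫ x, |u x| ∂μ ≤ ∫ x, |v x| ∂μ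

/-- The least `L¹` norm of a feasible control for the moment `c`. It is `0` at infeasible `c`,
being the infimum of the empty set of reals. -/
def l1Value (μ : Measure X) (φ : X → E) (c : E) : ℝ :=
  sInf {r | ∃ u, IsFeasible μ φ c u ∧ r = ∫ x, |u x| ∂μ}

variable {μ : Measure X} {φ : X → E} {c d : E} {u v : X → ℝ}

namespace IsFeasible

lemma congr (hu : IsFeasible μ φ c u) (h : u =ᵐ[μ] v) : IsFeasible μ φ c v where
  aestronglyMeasurable := hu.aestronglyMeasurable.congr h
  abs_le_one := by
    filter_upwards [hu.abs_le_one, h] with x hx hxv using hxv ▸ hx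
  integral_eq := by
    rw [← hu.integral_eq]
    refine integral_congr_ae ?_
    filter_upwards [h] with x hx using by rw [hx]

lemma neg (hu : IsFeasible μ φ c u) : IsFeasible μ φ (-c) (-u) where
  aestronglyMeasurable := hu.aestronglyMeasurable.neg
  abs_le_one := by simpa only [Pi.neg_apply, abs_neg] using hu.abs_le_one
  integral_eq := by simp only [Pi.neg_apply, neg_smul, integral_neg, hu.integral_eq]

lemma integrable_smul (hu : IsFeasible μ φ c u) (hφ : Integrable φ μ) :
    Integrable (fun x ↦ u x • φ x) μ :=
  hφ.bdd_smul 1 hu.aestronglyMeasurable hu.abs_le_one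

lemma integrable [IsFiniteMeasure μ] (hu : IsFeasible μ φ c u) : Integrable u μ :=
  .of_bound hu.aestronglyMeasurable 1 hu.abs_le_one

lemma smul_add_smul (hu : IsFeasible μ φ c u) (hv : IsFeasible μ φ d v) (hφ : Integrable φ μ)
    {a b : ℝ} (ha : 0 ≤ a) (hb : 0 ≤ b) (hab : a + b = 1) :
    IsFeasible μ φ (a • c + b • d) (a • u + b • v) where
  aestronglyMeasurable :=
    (hu.aestronglyMeasurable.const_smul a).add (hv.aestronglyMeasurable.const_smul b)
  abs_le_one := by
    filter_upwards [hu.abs_le_one, hv.abs_le_one] with x hux hvx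
    simpa using convex_closedBall (0 : ℝ) 1 (by simpa using hux) (by simpa using hvx) ha hb hab
  integral_eq := by
    rw [← hu.integral_eq, ← hv.integral_eq, ← integral_smul, ← integral_smul,
      ← integral_add ((hu.integrable_smul hφ).fun_smul a) ((hv.integrable_smul hφ).fun_smul b)]
    simp only [Pi.add_apply, Pi.smul_apply, add_smul, smul_assoc]

lemma l1Value_le (hu : IsFeasible μ φ c u) : l1Value μ φ c ≤ ∫ x, |u x| ∂μ :=
  csInf_le ⟨0, by rintro _ ⟨v, -, rfl⟩; exact integral_nonneg fun x ↦ abs_nonneg _⟩ ⟨u, hu, rfl⟩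

end IsFeasible

lemma IsOptimal.l1Value_eq (hu : IsOptimal μ φ c u) : l1Value μ φ c = ∫ x, |u x| ∂μ :=
  IsLeast.csInf_eq ⟨⟨u, hu.1, rfl⟩, by rintro _ ⟨v, hv, rfl⟩; exact hu.2 v hv⟩

lemma l1Value_neg (c : E) : l1Value μ φ (-c) = l1Value μ φ c := by
  refine congrArg sInf (Set.ext fun r ↦ ?_)
  constructor <;> rintro ⟨u, hu, rfl⟩ <;>
    exact ⟨-u, by simpa using hu.neg, by simp⟩

lemma convex_setOf_exists_isFeasible (hφ : Integrable φ μ) :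
    Convex ℝ {c | ∃ u, IsFeasible μ φ c u} := by
  rintro c ⟨u, hu⟩ d ⟨v, hv⟩ a b ha hb hab
  exact ⟨_, hu.smul_add_smul hv hφ ha hb hab⟩

lemma IsFeasible.of_tendsto_ae (hφ : Integrable φ μ) {w : ℕ → X → ℝ}
    (hw : ∀ k, IsFeasible μ φ c (w k))
    (hu : ∀ᵐ x ∂μ, Tendsto (fun k ↦ w k x) atTop (𝓝 (u x))) :
    IsFeasible μ φ c u where
  aestronglyMeasurable :=
    aestronglyMeasurable_of_tendsto_ae _ (fun k ↦ (hw k).aestronglyMeasurable) hu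
  abs_le_one := by
    filter_upwards [ae_all_iff.2 fun k ↦ (hw k).abs_le_one, hu] with x hwx hux
    exact le_of_tendsto' hux.abs hwx
  integral_eq := by
    refine tendsto_nhds_unique (tendsto_integral_of_dominated_convergence (fun x ↦ ‖φ x‖)
      (fun k ↦ ((hw k).integrable_smul hφ).aestronglyMeasurable) hφ.norm (fun k ↦ ?_) ?_)
      (by simp only [(hw _).integral_eq]; exact tendsto_const_nhds)
    · filter_upwards [(hw k).abs_le_one] with x hx
      rw [norm_smul]
      exact mul_le_of_le_one_left (norm_nonneg _) hx
    · filter_upwards [hu] with x hx using hx.smul_const _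

lemma tendsto_integral_abs_of_isFeasible [IsFiniteMeasure μ] {w : ℕ → X → ℝ}
    (hw : ∀ k, IsFeasible μ φ c (w k))
    (hu : ∀ᵐ x ∂μ, Tendsto (fun k ↦ w k x) atTop (𝓝 (u x))) :
    Tendsto (fun k ↦ ∫ x, |w k x| ∂μ) atTop (𝓝 (∫ x, |u x| ∂μ)) := by
  refine tendsto_integral_of_dominated_convergence (fun _ ↦ 1)
    (fun k ↦ (hw k).integrable.abs.aestronglyMeasurable) (integrable_const 1) (fun k ↦ ?_) ?_
  · filter_upwards [(hw k).abs_le_one] with x hx using by rwa [Real.norm_eq_abs, abs_abs]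
  · filter_upwards [hu] with x hx using hx.abs

lemma isClosed_setOf_isFeasible_le [IsFiniteMeasure μ] (hφ : Integrable φ μ) (r : ℝ) :
    IsClosed {u ∈ {u : Lp ℝ 2 μ | IsFeasible μ φ c u} | ∫ x, |u x| ∂μ ≤ r} := by
  refine IsSeqClosed.isClosed fun w u hw hwu ↦ ?_
  obtain ⟨k, -, hk⟩ := (tendstoInMeasure_of_tendsto_Lp hwu).exists_seq_tendsto_ae
  have hfeas (i : ℕ) := (hw (k i)).1
  exact ⟨.of_tendsto_ae hφ hfeas hk,
    le_of_tendsto' (tendsto_integral_abs_of_isFeasible hfeas hk) fun i ↦ (hw (k i)).2⟩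

lemma isBounded_setOf_isFeasible [IsFiniteMeasure μ] :
    Bornology.IsBounded {u : Lp ℝ 2 μ | IsFeasible μ φ c u} :=
  isBounded_iff_forall_norm_le.2 ⟨_, fun _ hu ↦ Lp.norm_le_of_ae_bound zero_le_one hu.abs_le_one⟩

lemma abs_mul_add_mul_le {a b : ℝ} (ha : 0 ≤ a) (hb : 0 ≤ b) (s t : ℝ) :
    |a * s + b * t| ≤ a * |s| + b * |t| := by
  simpa only [abs_mul, abs_of_nonneg ha, abs_of_nonneg hb] using abs_add_le (a * s) (b * t)

lemma integral_mul_abs_add_mul_abs (hu : Integrable u μ) (hv : Integrable v μ) (a b : ℝ) :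
    ∫ x, (a * |u x| + b * |v x|) ∂μ = a * ∫ x, |u x| ∂μ + b * ∫ x, |v x| ∂μ := by
  rw [integral_add (hu.abs.const_mul a) (hv.abs.const_mul b), integral_const_mul,
    integral_const_mul]

lemma integral_abs_smul_add_smul_le (hu : Integrable u μ) (hv : Integrable v μ) {a b : ℝ}
    (ha : 0 ≤ a) (hb : 0 ≤ b) :
    ∫ x, |(a • u + b • v) x| ∂μ ≤ a * ∫ x, |u x| ∂μ + b * ∫ x, |v x| ∂μ := by
  rw [← integral_mul_abs_add_mul_abs hu hv]
  exact integral_mono ((hu.smul a).add (hv.smul b)).abs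
    ((hu.abs.const_mul a).add (hv.abs.const_mul b)) fun x ↦ abs_mul_add_mul_le ha hb _ _

lemma convexOn_integral_abs_isFeasible [IsFiniteMeasure μ] (hφ : Integrable φ μ) :
    ConvexOn ℝ {u : Lp ℝ 2 μ | IsFeasible μ φ c u} fun u ↦ ∫ x, |u x| ∂μ := by
  have hcoe (u v : Lp ℝ 2 μ) (a b : ℝ) : a • ⇑u + b • ⇑v =ᵐ[μ] ⇑(a • u + b • v) := by
    filter_upwards [Lp.coeFn_add (a • u) (b • v), Lp.coeFn_smul a u, Lp.coeFn_smul b v]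
      with x hadd hu hv
    rw [hadd, Pi.add_apply, Pi.add_apply, hu, hv]
  refine ⟨fun u hu v hv a b ha hb hab ↦ ?_, fun u hu v hv a b ha hb _ ↦ ?_⟩
  · have hw := (hu.smul_add_smul hv hφ ha hb hab).congr (hcoe u v a b)
    rwa [Convex.combo_self hab] at hw
  · refine le_of_eq_of_le (integral_congr_ae ?_)
      (integral_abs_smul_add_smul_le hu.integrable hv.integrable ha hb)
    filter_upwards [hcoe u v a b] with x hx using by rw [hx]

/- Feasible controls are bounded, so they lie in `L²`, which, unlike `L¹`, has weakly compact
bounded closed convex sets. -/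
lemma IsFeasible.exists_isOptimal [IsFiniteMeasure μ] (hφ : Integrable φ μ)
    (hu : IsFeasible μ φ c u) : ∃ v, IsOptimal μ φ c v := by
  have hmem {v} (hv : IsFeasible μ φ c v) : MemLp v 2 μ :=
    .of_bound hv.aestronglyMeasurable 1 hv.abs_le_one
  have hfeas {v} (hv : IsFeasible μ φ c v) : IsFeasible μ φ c ((hmem hv).toLp v) :=
    hv.congr (hmem hv).coeFn_toLp.symm
  obtain ⟨v, hv, hmin⟩ := exists_isMinOn_of_quasiconvexOn
    (surjective_inclusionInDoubleDual (Lp ℝ 2 μ)) ⟨_, hfeas hu⟩ isBounded_setOf_isFeasible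
    (convexOn_integral_abs_isFeasible hφ).quasiconvexOn (isClosed_setOf_isFeasible_le hφ)
  refine ⟨v, hv, fun w hw ↦ (isMinOn_iff.1 hmin _ (hfeas hw)).trans_eq (integral_congr_ae ?_)⟩
  filter_upwards [(hmem hw).coeFn_toLp] with x hx using by rw [hx]

lemma abs_sub_abs_mul_one_sub_abs_mul {t d : ℝ} (ht : |t| ≤ 1) (hd : |d| ≤ 1) :
    |t - |t| * (1 - |t|) * d| = |t| - t * (1 - |t|) * d := by
  have hsmall : |(1 - |t|) * d| ≤ 1 := by
    rw [abs_mul, abs_of_nonneg (sub_nonneg.2 ht)]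
    exact mul_le_one₀ (by linarith [abs_nonneg t]) (abs_nonneg d) hd
  obtain ⟨hlo, hhi⟩ := abs_le.1 hsmall
  obtain h | h := abs_cases t
  · rw [h.1] at hlo hhi ⊢
    rw [abs_of_nonneg (by nlinarith)]
  · rw [h.1] at hlo hhi ⊢
    rw [abs_of_nonpos] <;> nlinarith

lemma abs_sub_abs_mul_one_sub_abs_mul_le_one {t d : ℝ} (ht : |t| ≤ 1) (hd : |d| ≤ 1) :
    |t - |t| * (1 - |t|) * d| ≤ 1 := by
  have hρ : 0 ≤ |t| * (1 - |t|) := mul_nonneg (abs_nonneg t) (sub_nonneg.2 ht)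
  calc |t - |t| * (1 - |t|) * d|
      ≤ |t| + |t| * (1 - |t|) * |d| := by
        simpa only [abs_mul, abs_abs, abs_of_nonneg (sub_nonneg.2 ht)] using
          abs_sub t (|t| * (1 - |t|) * d)
    _ ≤ |t| + |t| * (1 - |t|) := add_le_add le_rfl (mul_le_of_le_one_right hρ hd)
    _ ≤ 1 := by nlinarith [sq_nonneg (1 - |t|)]

lemma IsFeasible.sub_abs_mul_one_sub_abs_mul (hu : IsFeasible μ φ c u) (hφ : Integrable φ μ)
    {h : X → ℝ} (hmeas : AEStronglyMeasurable h μ)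
    (hh : ∀ᵐ x ∂μ, |h x| ≤ 1) (hzero : ∫ x, h x • (|u x| * (1 - |u x|)) • φ x ∂μ = 0) :
    IsFeasible μ φ c fun x ↦ u x - |u x| * (1 - |u x|) * h x := by
  have habs := hu.aestronglyMeasurable.norm
  have hmeas' : AEStronglyMeasurable (fun x ↦ u x - |u x| * (1 - |u x|) * h x) μ :=
    hu.aestronglyMeasurable.sub ((habs.mul (aestronglyMeasurable_const.sub habs)).mul hmeas)
  have hbound : ∀ᵐ x ∂μ, |u x - |u x| * (1 - |u x|) * h x| ≤ 1 := by
    filter_upwards [hu.abs_le_one, hh] with x hx hhx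
    exact abs_sub_abs_mul_one_sub_abs_mul_le_one hx hhx
  refine ⟨hmeas', hbound, ?_⟩
  have hint : Integrable (fun x ↦ (u x - |u x| * (1 - |u x|) * h x) • φ x) μ :=
    hφ.bdd_smul 1 hmeas' hbound
  rw [← hu.integral_eq, ← sub_eq_zero, ← integral_sub hint (hu.integrable_smul hφ),
    ← neg_eq_zero, ← integral_neg, ← hzero]
  exact integral_congr_ae (.of_forall fun x ↦ by module)

lemma IsOptimal.integral_mul_one_sub_abs_nonpos [IsFiniteMeasure μ] (hu : IsOptimal μ φ c u)
    (hφ : Integrable φ μ) {h : X → ℝ} (hmeas : AEStronglyMeasurable h μ)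
    (hh : ∀ᵐ x ∂μ, |h x| ≤ 1) (hzero : ∫ x, h x • (|u x| * (1 - |u x|)) • φ x ∂μ = 0) :
    ∫ x, h x * (u x * (1 - |u x|)) ∂μ ≤ 0 := by
  have hv := hu.1.sub_abs_mul_one_sub_abs_mul hφ hmeas hh hzero
  have hle := sub_nonneg.2 (hu.2 _ hv)
  rw [← integral_sub hv.integrable.abs hu.1.integrable.abs] at hle
  rw [← neg_nonneg, ← integral_neg]
  refine hle.trans_eq (integral_congr_ae ?_)
  filter_upwards [hu.1.abs_le_one, hh] with x hx hhx
  rw [abs_sub_abs_mul_one_sub_abs_mul hx hhx]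
  ring

lemma abs_mul_one_sub_abs_le_one {t : ℝ} (ht : |t| ≤ 1) : |t * (1 - |t|)| ≤ 1 := by
  rw [abs_mul, abs_of_nonneg (sub_nonneg.2 ht)]
  exact mul_le_one₀ ht (sub_nonneg.2 ht) (by linarith [abs_nonneg t])

lemma IsFeasible.integrable_mul_one_sub_abs [IsFiniteMeasure μ] (hu : IsFeasible μ φ c u) :
    Integrable (fun x ↦ u x * (1 - |u x|)) μ := by
  have hmeas := hu.aestronglyMeasurable
  refine .of_bound (hmeas.mul (aestronglyMeasurable_const.sub hmeas.norm)) 1 ?_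
  filter_upwards [hu.abs_le_one] with x hx using abs_mul_one_sub_abs_le_one hx

lemma IsFeasible.integrable_abs_mul_one_sub_abs_smul (hu : IsFeasible μ φ c u)
    (hφ : Integrable φ μ) : Integrable (fun x ↦ (|u x| * (1 - |u x|)) • φ x) μ := by
  have hmeas := hu.aestronglyMeasurable.norm
  refine hφ.bdd_smul 1 (hmeas.mul (aestronglyMeasurable_const.sub hmeas)) ?_
  filter_upwards [hu.abs_le_one] with x hx
  simpa [abs_mul] using abs_mul_one_sub_abs_le_one hx

lemma IsOptimal.ker_integralSimpleFuncSMul_le [IsFiniteMeasure μ] (hu : IsOptimal μ φ c u)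
    (hφ : Integrable φ μ) :
    LinearMap.ker (integralSimpleFuncSMul (hu.1.integrable_abs_mul_one_sub_abs_smul hφ)) ≤
      LinearMap.ker (integralSimpleFuncSMul hu.1.integrable_mul_one_sub_abs) := by
  set K := integralSimpleFuncSMul (hu.1.integrable_abs_mul_one_sub_abs_smul hφ)
  set L := integralSimpleFuncSMul hu.1.integrable_mul_one_sub_abs
  have hnonpos {g : SimpleFunc X ℝ} (hg : K g = 0) : L g ≤ 0 := by
    obtain ⟨C, hC⟩ := g.exists_forall_norm_le
    have hpos : 0 < max C 1 := lt_max_of_lt_right one_pos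
    have hscaled : (max C 1)⁻¹ * L g ≤ 0 := by
      rw [← smul_eq_mul, ← map_smul]
      refine hu.integral_mul_one_sub_abs_nonpos hφ ((max C 1)⁻¹ • g).aestronglyMeasurable
        (.of_forall fun x ↦ ?_) ?_
      · rw [SimpleFunc.coe_smul, Pi.smul_apply, smul_eq_mul, abs_mul, abs_of_pos (inv_pos.2 hpos)]
        exact inv_mul_le_one_of_le₀ ((hC x).trans (le_max_left _ _)) hpos.le
      · exact (map_smul K _ g).trans (by rw [hg, smul_zero])
    exact nonpos_of_mul_nonpos_right hscaled (inv_pos.2 hpos)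
  intro g hg
  have hneg : -L g ≤ 0 := by
    rw [← map_neg]
    exact hnonpos (by rw [map_neg, LinearMap.mem_ker.1 hg, neg_zero])
  exact le_antisymm (hnonpos hg) (neg_nonpos.1 hneg)

theorem IsOptimal.exists_strongDual_bang_off_bang [IsFiniteMeasure μ] [FiniteDimensional ℝ E]
    (hu : IsOptimal μ φ c u) (hφ : Integrable φ μ) :
    ∃ p : StrongDual ℝ E, ∀ᵐ x ∂μ, u x = 0 ∨ |u x| = 1 ∨ |p (φ x)| = 1 := by
  obtain ⟨p, hp⟩ := exists_strongDual_ae_eq_of_ker_le _ _ (hu.ker_integralSimpleFuncSMul_le hφ)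
  refine ⟨p, ?_⟩
  filter_upwards [hp] with x hx
  by_contra! h
  obtain ⟨hne_zero, hne_one, hne⟩ := h
  rw [map_smul, smul_eq_mul, mul_right_comm] at hx
  have hsign := mul_right_cancel₀ (sub_ne_zero.2 hne_one.symm) hx
  refine hne (mul_left_cancel₀ (abs_ne_zero.2 hne_zero) ?_)
  rw [mul_one, ← abs_abs (u x), ← abs_mul, ← hsign, abs_abs]

lemma eq_of_abs_mul_add_mul_eq {s t a b : ℝ} (hs : |s| ≤ 1) (ht : |t| ≤ 1) (ha : 0 < a)
    (hb : 0 < b) (hab : a + b = 1) (habs : |a * s + b * t| = a * |s| + b * |t|)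
    (h : a * s + b * t = 0 ∨ |a * s + b * t| = 1) : s = t := by
  obtain hzero | hone := h
  · rw [hzero, abs_zero] at habs
    have hs_zero : |s| = 0 := by nlinarith [abs_nonneg s, abs_nonneg t]
    have ht_zero : |t| = 0 := by nlinarith [abs_nonneg s, abs_nonneg t]
    rw [abs_eq_zero.1 hs_zero, abs_eq_zero.1 ht_zero]
  · obtain ⟨hs_lo, hs_hi⟩ := abs_le.1 hs
    obtain ⟨ht_lo, ht_hi⟩ := abs_le.1 ht
    obtain heq | heq := eq_or_eq_neg_of_abs_eq hone <;> nlinarith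

theorem strictConvexOn_l1Value [IsFiniteMeasure μ] [FiniteDimensional ℝ E] (hφ : Integrable φ μ)
    (hne : ∀ p : StrongDual ℝ E, ∀ᵐ x ∂μ, |p (φ x)| ≠ 1) :
    StrictConvexOn ℝ {c | ∃ u, IsFeasible μ φ c u} (l1Value μ φ) := by
  refine ⟨convex_setOf_exists_isFeasible hφ, ?_⟩
  rintro c ⟨_, huc⟩ d ⟨_, hvd⟩ hcd a b ha hb hab
  obtain ⟨u, hu⟩ := huc.exists_isOptimal hφ
  obtain ⟨v, hv⟩ := hvd.exists_isOptimal hφ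
  have hw := hu.1.smul_add_smul hv.1 hφ ha.le hb.le hab
  have hle := integral_abs_smul_add_smul_le hu.1.integrable hv.1.integrable ha.le hb.le
  rw [smul_eq_mul, smul_eq_mul, hu.l1Value_eq, hv.l1Value_eq]
  refine (hw.l1Value_le.trans hle).lt_of_ne fun heq ↦ hcd ?_
  have hwopt : IsOptimal μ φ (a • c + b • d) (a • u + b • v) :=
    ⟨hw, fun w hwf ↦ hle.trans (heq ▸ hwf.l1Value_le)⟩
  have habs : (fun x ↦ |(a • u + b • v) x|) =ᵐ[μ] fun x ↦ a * |u x| + b * |v x| := by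
    refine (integral_eq_iff_of_ae_le hw.integrable.abs
      ((hu.1.integrable.abs.const_mul a).add (hv.1.integrable.abs.const_mul b))
      (.of_forall fun x ↦ abs_mul_add_mul_le ha.le hb.le _ _)).1 ?_
    exact (hle.antisymm (heq ▸ hw.l1Value_le)).trans
      (integral_mul_abs_add_mul_abs hu.1.integrable hv.1.integrable a b).symm
  obtain ⟨p, hp⟩ := hwopt.exists_strongDual_bang_off_bang hφ
  have huv : u =ᵐ[μ] v := by
    filter_upwards [hu.1.abs_le_one, hv.1.abs_le_one, habs, hp, hne p] with x hux hvx hx hpx hnex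
    refine eq_of_abs_mul_add_mul_eq hux hvx ha hb hab hx ?_
    simpa [hnex] using hpx
  exact (hu.1.congr huv).integral_eq.symm.trans hv.1.integral_eq

end MomentProblem

section LinearSystem

open scoped Matrix

attribute [local instance] Matrix.linftyOpNormedRing Matrix.linftyOpNormedAlgebra

variable {n : ℕ} {T : ℝ} {A : Matrix (Fin n) (Fin n) ℝ} {B ξ : Fin n → ℝ} {u : ℝ → ℝ}

/-- The kernel `s ↦ e^{-As} B` of the moment problem of the linear system. -/
def impulseResponse (A : Matrix (Fin n) (Fin n) ℝ) (B : Fin n → ℝ) (s : ℝ) : Fin n → ℝ :=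
  NormedSpace.exp ((-s) • A) *ᵥ B

lemma continuous_impulseResponse : Continuous (impulseResponse A B) :=
  (NormedSpace.exp_continuous.comp (by fun_prop)).matrix_mulVec continuous_const

lemma integrable_impulseResponse :
    Integrable (impulseResponse A B) (volume.restrict (Icc 0 T)) :=
  continuous_impulseResponse.continuousOn.integrableOn_compact isCompact_Icc

lemma ae_strongDual_impulseResponse_ne
    (hB : B ∈ Submodule.span ℝ (range fun k : ℕ ↦ A ^ (k + 1) *ᵥ B))
    (p : StrongDual ℝ (Fin n → ℝ)) {c : ℝ} (hc : c ≠ 0) : ∀ᵐ s, p (impulseResponse A B s) ≠ c := by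
  let ℓ : StrongDual ℝ (Matrix (Fin n) (Fin n) ℝ) :=
    (p.toLinearMap ∘ₗ (Matrix.mulVecBilin ℝ ℝ).flip B).toContinuousLinearMap
  have hae : ∀ᵐ s : ℝ, ℓ (NormedSpace.exp (s • A)) ≠ c := by
    refine ae_strongDual_exp_smul_ne hc fun h ↦ ?_
    have hker : Submodule.span ℝ (range fun k : ℕ ↦ A ^ (k + 1) *ᵥ B) ≤
        LinearMap.ker p.toLinearMap := Submodule.span_le.2 (range_subset_iff.2 h)
    calc ℓ 1 = p B := congrArg p (Matrix.one_mulVec B)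
      _ = 0 := hker hB
  exact (quasiMeasurePreserving_neg volume).ae hae

lemma exists_measurable_magBdd_ae_eq (hmeas : AEStronglyMeasurable u (volume.restrict (Icc 0 T)))
    (hu : ∀ᵐ t ∂volume.restrict (Icc 0 T), |u t| ≤ 1) :
    ∃ v, Measurable v ∧ MagBdd T v ∧ u =ᵐ[volume.restrict (Icc 0 T)] v := by
  refine ⟨fun t ↦ max (-1) (min 1 (hmeas.mk u t)),
    measurable_const.max (measurable_const.min hmeas.stronglyMeasurable_mk.measurable),
    fun t _ ↦ abs_le.2 ⟨le_max_left _ _, max_le (by norm_num) (min_le_left _ _)⟩, ?_⟩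
  filter_upwards [hmeas.ae_eq_mk, hu] with t htmk ht
  rw [← htmk, min_eq_right (abs_le.1 ht).2, max_eq_right (abs_le.1 ht).1]

lemma isFeasible_of_magBdd (hmeas : Measurable u) (hu : MagBdd T u) :
    IsFeasible (volume.restrict (Icc 0 T)) (impulseResponse A B) (stateInt n T A B u) u :=
  ⟨hmeas.aestronglyMeasurable, ae_restrict_of_forall_mem measurableSet_Icc hu, rfl⟩

lemma Admissible.isFeasible (hu : Admissible n T A B ξ u) :
    IsFeasible (volume.restrict (Icc 0 T)) (impulseResponse A B) (-ξ) u :=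
  hu.2.2 ▸ isFeasible_of_magBdd hu.1 hu.2.1

lemma reach_eq_setOf_exists_isFeasible (n : ℕ) (T : ℝ) (A : Matrix (Fin n) (Fin n) ℝ)
    (B : Fin n → ℝ) :
    Reach n T A B =
      {c | ∃ u, IsFeasible (volume.restrict (Icc 0 T)) (impulseResponse A B) c u} := by
  ext c
  constructor
  · rintro ⟨u, hmeas, hu, rfl⟩
    exact ⟨u, isFeasible_of_magBdd hmeas hu⟩
  · rintro ⟨u, hu⟩
    obtain ⟨v, hmeas, hv, huv⟩ := exists_measurable_magBdd_ae_eq hu.1 hu.2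
    exact ⟨v, hmeas, hv, (hu.congr huv).integral_eq.symm⟩

lemma V1_eq_l1Value (n : ℕ) (T : ℝ) (A : Matrix (Fin n) (Fin n) ℝ) (B : Fin n → ℝ) :
    V1 n T A B = l1Value (volume.restrict (Icc 0 T)) (impulseResponse A B) := by
  ext ξ
  rw [← l1Value_neg]
  refine congrArg sInf (Set.ext fun r ↦ ⟨?_, ?_⟩)
  · rintro ⟨u, hu, rfl⟩
    exact ⟨u, hu.isFeasible, rfl⟩
  · rintro ⟨u, hu, rfl⟩
    obtain ⟨v, hmeas, hv, huv⟩ := exists_measurable_magBdd_ae_eq hu.1 hu.2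
    refine ⟨v, ⟨hmeas, hv, (hu.congr huv).integral_eq⟩, integral_congr_ae ?_⟩
    filter_upwards [huv] with t ht using by rw [ht]

theorem L1_value_function_strictly_convex_general (n : ℕ) (T : ℝ) (A : Matrix (Fin n) (Fin n) ℝ)
    (B : Fin n → ℝ) (hB : B ∈ Submodule.span ℝ (range fun k : ℕ ↦ A ^ (k + 1) *ᵥ B)) :
    StrictConvexOn ℝ (Reach n T A B) (V1 n T A B) := by
  rw [reach_eq_setOf_exists_isFeasible, V1_eq_l1Value]
  refine strictConvexOn_l1Value integrable_impulseResponse fun p ↦ ae_restrict_of_ae ?_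
  filter_upwards [ae_strongDual_impulseResponse_ne hB p one_ne_zero,
    ae_strongDual_impulseResponse_ne hB p (neg_ne_zero.2 one_ne_zero)] with s hne_one hne_neg_one
  exact fun habs ↦ (eq_or_eq_neg_of_abs_eq habs).elim hne_one hne_neg_one

end LinearSystem

theorem L1_value_function_strictly_convex (n : ℕ) (T : ℝ) (hT : 0 < T)
    (A : Matrix (Fin n) (Fin n) ℝ) (B : Fin n → ℝ)
    (hctrb : (ctrbMatrix n A B).rank = n) (hA : A.det ≠ 0) :
    ∀ ξ ∈ Reach n T A B, ∀ η ∈ Reach n T A B, ξ ≠ η →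
      ∀ l : ℝ, 0 < l → l < 1 →
        V1 n T A B ((1 - l) • ξ + l • η)
          < (1 - l) * V1 n T A B ξ + l * V1 n T A B η := by
  intro ξ hξ η hη hne l hl_pos hl_lt
  exact (L1_value_function_strictly_convex_general n T A B (mem_span_range_pow_succ_mulVec hA B)).2
    hξ hη hne (sub_pos.2 hl_lt) hl_pos (sub_add_cancel 1 l)
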